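/- arXiv:1304.6746 — 2 statements merged into one kernel-verified Lean document; each statement's English description precedes it below -/
import Mathlib

section
/- Let Σ = Σ⁽¹⁾ ⊗ Σ⁽²⁾ be the Kronecker product of two positive definite 2×2 matrices Σ⁽¹⁾ and Σ⁽²⁾, and let f(x₁,x₂,x₃,x₄) = x₁x₄ − x₂x₃. Then W_{f,Σ} has the same distribution as (1/4)·R²·U², where R² ~ χ²₄ and U ~ Uniform[0,1] are independent. -/
open MeasureTheory ProbabilityTheory Matrix MvPolynomial Real

noncomputable section

/-- The distribution of a vector of independent standard normal random variables. -/
def stdGaussian (ι : Type*) [Fintype ι] : Measure (ι → ℝ) :=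
  Measure.pi fun _ => gaussianReal 0 1

/-- `μ` is the distribution of a centered Gaussian random vector with covariance matrix `S`,
i.e. `μ` is the law of `A Z` for a vector `Z` of i.i.d. standard normals with `A Aᵀ = S`. -/
def IsCenteredGaussian {ι : Type*} [Fintype ι] (μ : Measure (ι → ℝ))
    (S : Matrix ι ι ℝ) : Prop :=
  ∃ A : Matrix ι ι ℝ, A * Aᵀ = S ∧ μ = (stdGaussian ι).map A.mulVec

/-- The gradient of a polynomial. -/
def polyGrad {ι : Type*} [Fintype ι] (f : MvPolynomial ι ℝ) (x : ι → ℝ) : ι → ℝ :=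
  fun i => eval x (pderiv i f)

/-- The Wald ratio `W_{f,S}(x) = f(x)² / (∇f(x)ᵀ S ∇f(x))`. -/
def waldRV {ι : Type*} [Fintype ι] (f : MvPolynomial ι ℝ) (S : Matrix ι ι ℝ)
    (x : ι → ℝ) : ℝ :=
  (eval x f) ^ 2 / (polyGrad f x ⬝ᵥ S.mulVec (polyGrad f x))

/-- The chi-square distribution with `k` degrees of freedom. -/
def chiSq (k : ℕ) : Measure ℝ :=
  (stdGaussian (Fin k)).map fun z => ∑ i, (z i) ^ 2

open scoped ENNReal

namespace TetradAux

/-- half-exponential density -/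
def w (x : ℝ) : ℝ≥0∞ := ENNReal.ofReal (1 / 2 * Real.exp (-x / 2))

/-- density of the sum, without the factor `s` -/
def k (x : ℝ) : ℝ≥0∞ := ENNReal.ofReal (1 / 4 * Real.exp (-x / 2))

lemma measurable_w : Measurable w := by unfold w; fun_prop

lemma measurable_k : Measurable k := by unfold k; fun_prop

lemma w_mul (x s : ℝ) : w x * w (s - x) = k s := by
  unfold w k
  rw [← ENNReal.ofReal_mul (by positivity)]
  congr 1
  rw [show (1 / 2 * Real.exp (-x / 2)) * (1 / 2 * Real.exp (-(s - x) / 2))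
    = 1 / 4 * (Real.exp (-x / 2) * Real.exp (-(s - x) / 2)) by ring, ← Real.exp_add]
  congr 2
  ring

lemma gauss_pair (φ : ℝ → ℝ≥0∞) (hφ : Measurable φ) :
    ∫⁻ z, φ (z.1 ^ 2 + z.2 ^ 2) ∂((gaussianReal 0 1).prod (gaussianReal 0 1)) =
      ∫⁻ s in Set.Ioi (0 : ℝ), w s * φ s := by
  have hpdf : ∀ z : ℝ × ℝ, gaussianPDF 0 1 z.1 * gaussianPDF 0 1 z.2 =
      ENNReal.ofReal ((2 * π)⁻¹ * Real.exp (-(z.1 ^ 2 + z.2 ^ 2) / 2)) := by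
    intro z
    unfold gaussianPDF gaussianPDFReal
    rw [← ENNReal.ofReal_mul (by positivity)]
    congr 1
    have h2 : √(2 * π) * √(2 * π) = 2 * π := Real.mul_self_sqrt (by positivity)
    simp only [NNReal.coe_one, mul_one, sub_zero]
    rw [mul_mul_mul_comm, ← mul_inv, h2, ← Real.exp_add]
    congr 2
    ring
  rw [gaussianReal_of_var_ne_zero 0 one_ne_zero,
    prod_withDensity (measurable_gaussianPDF 0 1) (measurable_gaussianPDF 0 1),
    lintegral_withDensity_eq_lintegral_mul _ (by fun_prop) (by fun_prop)]
  simp only [Pi.mul_apply, hpdf]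
  rw [← Measure.volume_eq_prod, ← lintegral_comp_polarCoord_symm]
  have himg : (fun r : ℝ => r ^ 2) '' Set.Ioi 0 = Set.Ioi 0 := by
    ext y
    constructor
    · rintro ⟨r, hr, rfl⟩
      exact pow_pos (show (0 : ℝ) < r from hr) 2
    · intro hy
      exact ⟨√y, Real.sqrt_pos.2 hy, Real.sq_sqrt (le_of_lt hy)⟩
  have hcv := lintegral_image_eq_lintegral_abs_deriv_mul (s := Set.Ioi (0 : ℝ))
    (f := fun r : ℝ => r ^ 2) (f' := fun r => 2 * r) measurableSet_Ioi
    (fun x _ => by simpa using (hasDerivAt_pow 2 x).hasDerivWithinAt)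
    (fun a ha b hb h => by
      exact (pow_left_inj₀ (le_of_lt ha) (le_of_lt hb) two_ne_zero).1 h)
    (fun s => w s * φ s)
  rw [himg] at hcv
  rw [hcv]
  have hpt : ∀ p : ℝ × ℝ, ENNReal.ofReal p.1 •
      (ENNReal.ofReal ((2 * π)⁻¹ * Real.exp
        (-((polarCoord.symm p).1 ^ 2 + (polarCoord.symm p).2 ^ 2) / 2)) *
        φ ((polarCoord.symm p).1 ^ 2 + (polarCoord.symm p).2 ^ 2)) =
      (ENNReal.ofReal p.1 * (ENNReal.ofReal ((2 * π)⁻¹ * Real.exp (-(p.1 ^ 2) / 2)) *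
        φ (p.1 ^ 2))) * 1 := by
    intro p
    have : (polarCoord.symm p).1 ^ 2 + (polarCoord.symm p).2 ^ 2 = p.1 ^ 2 := by
      simp only [polarCoord_symm_apply]
      linear_combination p.1 ^ 2 * Real.sin_sq_add_cos_sq p.2
    rw [this, smul_eq_mul, mul_one]
  simp only [hpt]
  rw [polarCoord_target, Measure.volume_eq_prod, ← Measure.prod_restrict,
    lintegral_prod_mul (f := fun r => ENNReal.ofReal r *
      (ENNReal.ofReal ((2 * π)⁻¹ * Real.exp (-(r ^ 2) / 2)) * φ (r ^ 2))) (g := fun _ => 1)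
      (by fun_prop) (by fun_prop), lintegral_one, Measure.restrict_apply_univ, Real.volume_Ioo,
    ← lintegral_mul_const _ (by fun_prop)]
  refine setLIntegral_congr_fun measurableSet_Ioi fun r hr => ?_
  have hr' : (0 : ℝ) < r := hr
  simp only [w]
  rw [← mul_assoc, ← mul_assoc, mul_right_comm, ← ENNReal.ofReal_mul hr'.le,
    ← ENNReal.ofReal_mul (by positivity), ← ENNReal.ofReal_mul (by positivity),
    abs_of_pos (by positivity)]
  congr 2
  field_simp
  ring

lemma scale_int (s : ℝ) (hs : 0 < s) (g : ℝ → ℝ≥0∞) :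
    ∫⁻ x in Set.Ioo 0 s, g x =
      ENNReal.ofReal s * ∫⁻ t in Set.Icc (0 : ℝ) 1, g (s * t) := by
  have himg : (fun r : ℝ => s * r) '' Set.Ioo 0 1 = Set.Ioo 0 s := by
    rw [Set.image_mul_left_Ioo hs]
    simp
  have hcv := lintegral_image_eq_lintegral_abs_deriv_mul (s := Set.Ioo (0 : ℝ) 1)
    (f := fun r : ℝ => s * r) (f' := fun _ => s) measurableSet_Ioo
    (fun x _ => by simpa using ((hasDerivAt_id x).const_mul s).hasDerivWithinAt)
    (fun a ha b hb h => mul_left_cancel₀ hs.ne' h) g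
  rw [himg] at hcv
  rw [hcv, lintegral_const_mul' _ _ ENNReal.ofReal_ne_top, abs_of_pos hs,
    restrict_Ioo_eq_restrict_Icc]

lemma conv_lemma (G : ℝ → ℝ → ℝ≥0∞) (hG : Measurable (Function.uncurry G)) :
    ∫⁻ x in Set.Ioi (0 : ℝ), w x * ∫⁻ y in Set.Ioi (0 : ℝ), w y * G (x + y) x =
      ∫⁻ s in Set.Ioi (0 : ℝ),
        k s * (ENNReal.ofReal s * ∫⁻ t in Set.Icc (0 : ℝ) 1, G s (s * t)) := by
  have hw := measurable_w
  have hk := measurable_k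
  have hT : MeasurableSet {p : ℝ × ℝ | 0 < p.1 ∧ p.1 < p.2} :=
    (measurableSet_lt measurable_const measurable_fst).inter
      (measurableSet_lt measurable_fst measurable_snd)
  set F : ℝ × ℝ → ℝ≥0∞ := Set.indicator {p : ℝ × ℝ | 0 < p.1 ∧ p.1 < p.2}
    (fun p => k p.2 * G p.2 p.1) with hF
  have hFm : Measurable F := by
    refine Measurable.indicator ?_ hT
    exact (hk.comp measurable_snd).mul (hG.comp measurable_swap)
  have h1 : ∫⁻ x in Set.Ioi (0 : ℝ), w x * ∫⁻ y in Set.Ioi (0 : ℝ), w y * G (x + y) x =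
      ∫⁻ x, ∫⁻ s, F (x, s) := by
    rw [← lintegral_indicator measurableSet_Ioi]
    refine lintegral_congr fun x => ?_
    rw [← lintegral_add_left_eq_self (fun s => F (x, s)) x]
    by_cases hx : 0 < x
    · rw [Set.indicator_of_mem (show x ∈ Set.Ioi (0:ℝ) from hx),
        ← lintegral_const_mul' _ _ (show w x ≠ ∞ from ENNReal.ofReal_ne_top),
        ← lintegral_indicator measurableSet_Ioi]
      refine lintegral_congr fun y => ?_
      by_cases hy : 0 < y
      · rw [Set.indicator_of_mem (show y ∈ Set.Ioi (0:ℝ) from hy), hF,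
          Set.indicator_of_mem (by simp [hx, hy])]
        have := w_mul x (x + y)
        rw [add_sub_cancel_left] at this
        rw [← mul_assoc, this]
      · rw [Set.indicator_of_notMem (by simpa using hy), hF,
          Set.indicator_of_notMem (by simpa [hx] using hy)]
    · rw [Set.indicator_of_notMem (by simpa using hx)]
      symm
      rw [lintegral_eq_zero_iff (by fun_prop)]
      refine Filter.Eventually.of_forall fun y => ?_
      simp [hF, Set.indicator, hx]
  rw [h1, lintegral_lintegral_swap (by exact hFm.aemeasurable),
    ← lintegral_indicator measurableSet_Ioi]
  refine lintegral_congr fun s => ?_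
  by_cases hs : 0 < s
  · rw [Set.indicator_of_mem (show s ∈ Set.Ioi (0:ℝ) from hs), ← scale_int s hs,
      ← lintegral_const_mul' _ _ (show k s ≠ ∞ from ENNReal.ofReal_ne_top),
      ← lintegral_indicator measurableSet_Ioo]
    rfl
  · rw [Set.indicator_of_notMem (by simpa using hs), lintegral_eq_zero_iff (by fun_prop)]
    refine Filter.Eventually.of_forall fun x => ?_
    have : ¬ (0 < x ∧ x < s) := fun h => hs (h.1.trans h.2)
    simp [hF, Set.indicator, this]

lemma even_int (ψ : ℝ → ℝ≥0∞) (he : ∀ x, ψ (-x) = ψ x) :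
    ∫⁻ t in Set.Icc (0 : ℝ) 1, ψ (2 * t - 1) = ∫⁻ t in Set.Icc (0 : ℝ) 1, ψ t := by
  have himg : (fun r : ℝ => 2 * r - 1) '' Set.Icc 0 1 = Set.Icc (-1) 1 := by
    ext y
    constructor
    · rintro ⟨r, hr, rfl⟩
      constructor <;> simp <;> linarith [hr.1, hr.2]
    · intro hy
      exact ⟨(y + 1) / 2, ⟨by linarith [hy.1], by linarith [hy.2]⟩, by simp; ring⟩
  have hcv := lintegral_image_eq_lintegral_abs_deriv_mul (s := Set.Icc (0 : ℝ) 1)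
    (f := fun r : ℝ => 2 * r - 1) (f' := fun _ => 2) measurableSet_Icc
    (fun x _ => by simpa using (((hasDerivAt_id x).const_mul 2).sub_const 1).hasDerivWithinAt)
    (fun a ha b hb h => by simpa using h) ψ
  have himg2 : (fun r : ℝ => -r) '' Set.Icc 0 1 = Set.Icc (-1) 0 := by
    simp
  have hcv2 := lintegral_image_eq_lintegral_abs_deriv_mul (s := Set.Icc (0 : ℝ) 1)
    (f := fun r : ℝ => -r) (f' := fun _ => -1) measurableSet_Icc
    (fun x _ => (hasDerivAt_neg x).hasDerivWithinAt)
    (fun a ha b hb h => by simpa using h) ψ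
  rw [himg] at hcv
  rw [himg2] at hcv2
  simp only [he, abs_neg, abs_one, ENNReal.ofReal_one, one_mul] at hcv2
  rw [lintegral_const_mul' _ _ ENNReal.ofReal_ne_top,
    ← Set.Icc_union_Ioc_eq_Icc (show (-1 : ℝ) ≤ 0 by norm_num) (show (0 : ℝ) ≤ 1 by norm_num),
    lintegral_union measurableSet_Ioc
      (Set.disjoint_left.2 fun x hx hx' => not_lt.2 hx.2 hx'.1),
    restrict_Ioc_eq_restrict_Icc, hcv2, ← two_mul] at hcv
  have h2 : ENNReal.ofReal |(2 : ℝ)| = 2 := by simp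
  rw [h2] at hcv
  exact ((ENNReal.mul_right_inj two_ne_zero ENNReal.ofNat_ne_top).1 hcv).symm

lemma key (φ : ℝ → ℝ≥0∞) (hφ : Measurable φ) :
    ∫⁻ x in Set.Ioi (0 : ℝ), w x * ∫⁻ y in Set.Ioi (0 : ℝ),
        w y * φ ((x - y) ^ 2 / (4 * (x + y))) =
      ∫⁻ x in Set.Ioi (0 : ℝ), w x * ∫⁻ y in Set.Ioi (0 : ℝ),
        w y * ∫⁻ u in Set.Icc (0 : ℝ) 1, φ (1 / 4 * (x + y) * u ^ 2) := by
  have hm : Measurable fun s : ℝ => ∫⁻ u in Set.Icc (0 : ℝ) 1, φ (1 / 4 * s * u ^ 2) := by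
    refine Measurable.lintegral_prod_right' (f := fun p : ℝ × ℝ => φ (1 / 4 * p.1 * p.2 ^ 2)) ?_
    fun_prop
  have h1 := conv_lemma (fun s x => φ ((2 * x - s) ^ 2 / (4 * s)))
    (by unfold Function.uncurry; fun_prop)
  have h2 := conv_lemma (fun s _ => ∫⁻ u in Set.Icc (0 : ℝ) 1, φ (1 / 4 * s * u ^ 2))
    (hm.comp measurable_fst)
  rw [h2]
  have e : ∀ x y : ℝ, 2 * x - (x + y) = x - y := fun x y => by ring
  simp only [e] at h1
  rw [h1]
  refine setLIntegral_congr_fun measurableSet_Ioi fun s hs => ?_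
  have hs' : (0 : ℝ) < s := hs
  have h3 := even_int (fun u => φ (1 / 4 * s * u ^ 2)) (fun x => by simp)
  simp only [lintegral_const, Measure.restrict_apply_univ, Real.volume_Icc, sub_zero,
    ENNReal.ofReal_one, mul_one]
  rw [← h3]
  congr 3 with t
  congr 1
  field_simp


/-- assemble a function on four points from pairs -/
lemma pair_law (φ : ℝ → ℝ → ℝ≥0∞) (hφ : Measurable (Function.uncurry φ)) :
    ∫⁻ z, φ (z.1.1 ^ 2 + z.1.2 ^ 2) (z.2.1 ^ 2 + z.2.2 ^ 2)
      ∂(((gaussianReal 0 1).prod (gaussianReal 0 1)).prod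
        ((gaussianReal 0 1).prod (gaussianReal 0 1))) =
      ∫⁻ x in Set.Ioi (0 : ℝ), w x * ∫⁻ y in Set.Ioi (0 : ℝ), w y * φ x y := by
  rw [lintegral_prod _ (by
    exact (hφ.comp (f := fun z : (ℝ × ℝ) × (ℝ × ℝ) =>
      (z.1.1 ^ 2 + z.1.2 ^ 2, z.2.1 ^ 2 + z.2.2 ^ 2)) (by fun_prop)).aemeasurable)]
  have h : ∀ a : ℝ, Measurable (φ a) := fun a => hφ.comp measurable_prodMk_left
  simp only [fun a => gauss_pair _ (h a)]
  refine gauss_pair (fun a => ∫⁻ y in Set.Ioi (0 : ℝ), w y * φ a y) ?_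
  refine Measurable.lintegral_prod_right' (f := fun p : ℝ × ℝ => w p.2 * φ p.1 p.2) ?_
  exact (measurable_w.comp measurable_snd).mul hφ

lemma std4 : _root_.stdGaussian (Fin 4) =
    (((gaussianReal 0 1).prod (gaussianReal 0 1)).prod
      ((gaussianReal 0 1).prod (gaussianReal 0 1))).map
      (fun z : (ℝ × ℝ) × (ℝ × ℝ) => ![z.1.1, z.1.2, z.2.1, z.2.2]) := by
  have hm : Measurable (fun z : (ℝ × ℝ) × (ℝ × ℝ) => ![z.1.1, z.1.2, z.2.1, z.2.2]) := by
    refine measurable_pi_lambda _ fun i => ?_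
    fin_cases i <;> simp <;> fun_prop
  refine Measure.pi_eq fun s hs => ?_
  rw [Measure.map_apply hm (MeasurableSet.univ_pi hs)]
  have : (fun z : (ℝ × ℝ) × (ℝ × ℝ) => ![z.1.1, z.1.2, z.2.1, z.2.2]) ⁻¹' (Set.univ.pi s) =
      (s 0 ×ˢ s 1) ×ˢ (s 2 ×ˢ s 3) := by
    ext z
    simp [Set.mem_pi, Fin.forall_fin_succ, and_assoc]
  rw [this]
  simp only [Measure.prod_prod, Fin.prod_univ_four]
  ring

lemma std22 : _root_.stdGaussian (Fin 2 × Fin 2) =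
    (((gaussianReal 0 1).prod (gaussianReal 0 1)).prod
      ((gaussianReal 0 1).prod (gaussianReal 0 1))).map
      (fun (z : (ℝ × ℝ) × (ℝ × ℝ)) (i : Fin 2 × Fin 2) =>
        !![z.1.1, z.1.2; z.2.1, z.2.2] i.1 i.2) := by
  have hm : Measurable (fun (z : (ℝ × ℝ) × (ℝ × ℝ)) (i : Fin 2 × Fin 2) =>
        !![z.1.1, z.1.2; z.2.1, z.2.2] i.1 i.2) := by
    refine measurable_pi_lambda _ fun i => ?_
    fin_cases i <;> simp <;> fun_prop
  refine Measure.pi_eq fun s hs => ?_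
  rw [Measure.map_apply hm (MeasurableSet.univ_pi hs)]
  have : (fun (z : (ℝ × ℝ) × (ℝ × ℝ)) (i : Fin 2 × Fin 2) =>
        !![z.1.1, z.1.2; z.2.1, z.2.2] i.1 i.2) ⁻¹' (Set.univ.pi s) =
      (s (0, 0) ×ˢ s (0, 1)) ×ˢ (s (1, 0) ×ˢ s (1, 1)) := by
    ext z
    simp [Set.mem_pi, Fin.forall_fin_succ]
  rw [this]
  simp only [Measure.prod_prod, Fintype.prod_prod_type, Fin.prod_univ_two]

lemma rot_inv {ι : Type*} [Fintype ι] [DecidableEq ι] (B : Matrix ι ι ℝ) (hB : B * Bᵀ = 1) :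
    (_root_.stdGaussian ι).map B.mulVec = _root_.stdGaussian ι := by
  have hB' : Bᵀ * B = 1 := mul_eq_one_comm.1 hB
  have hnorm : ∀ x, ‖Matrix.toEuclideanLin B x‖ = ‖x‖ := by
    intro x
    rw [EuclideanSpace.norm_eq, EuclideanSpace.norm_eq]
    congr 1
    have : (B *ᵥ x.ofLp) ⬝ᵥ (B *ᵥ x.ofLp) = x.ofLp ⬝ᵥ x.ofLp := by
      rw [Matrix.dotProduct_mulVec, Matrix.vecMul_mulVec, ← Matrix.dotProduct_mulVec,
        hB', Matrix.one_mulVec]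
    simpa [dotProduct, pow_two] using this
  let f : EuclideanSpace ℝ ι →ₗᵢ[ℝ] EuclideanSpace ℝ ι := ⟨Matrix.toEuclideanLin B, hnorm⟩
  let g := f.toLinearIsometryEquiv rfl
  have hg : ∀ x, g x = WithLp.toLp 2 (B *ᵥ x.ofLp) := fun x => rfl
  have h := ProbabilityTheory.stdGaussian_map g
  have h0 := ProbabilityTheory.map_pi_eq_stdGaussian (ι := ι)
  have hmul : Measurable (B.mulVec) := by
    have : Continuous (B.mulVec) := by fun_prop
    exact this.measurable
  rw [← h0, Measure.map_map g.continuous.measurable (by fun_prop)] at h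
  have h3 := congrArg (fun m => m.map (WithLp.ofLp (p := 2))) h
  simp only at h3
  rw [Measure.map_map (by fun_prop) (g.continuous.measurable.comp (by fun_prop)),
    Measure.map_map (by fun_prop) (by fun_prop)] at h3
  have e1 : (WithLp.ofLp (p := 2)) ∘ (⇑g ∘ WithLp.toLp 2) = B.mulVec := by
    ext x i
    simp [hg]
  have e2 : (WithLp.ofLp (p := 2)) ∘ (WithLp.toLp 2 : (ι → ℝ) → _) = id := rfl
  rw [e1, e2, Measure.map_id] at h3
  exact h3

lemma chol (S : Matrix (Fin 2) (Fin 2) ℝ) (hS : S.PosDef) :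
    ∃ L : Matrix (Fin 2) (Fin 2) ℝ, L * Lᵀ = S ∧ L.det ≠ 0 := by
  have ha : 0 < S 0 0 := hS.diag_pos
  have hd : 0 < S.det := hS.det_pos
  have hsym : S 1 0 = S 0 1 := by simpa using hS.isHermitian.apply 0 1
  have hd' := hd
  rw [Matrix.det_fin_two, hsym] at hd'
  have h1 := Real.mul_self_sqrt ha.le
  have hp : 0 < √(S 0 0) := Real.sqrt_pos.2 ha
  have hq : 0 < (S 0 0 * S 1 1 - S 0 1 * S 0 1) / S 0 0 := by positivity
  have h2 := Real.mul_self_sqrt hq.le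
  have heq : !![√(S 0 0), 0; S 0 1 / √(S 0 0), √((S 0 0 * S 1 1 - S 0 1 * S 0 1) / S 0 0)] *
      (!![√(S 0 0), 0; S 0 1 / √(S 0 0), √((S 0 0 * S 1 1 - S 0 1 * S 0 1) / S 0 0)])ᵀ = S := by
    ext i j
    fin_cases i <;> fin_cases j <;> simp [Matrix.mul_apply, Fin.sum_univ_two, h1]
    · exact mul_div_cancel₀ _ hp.ne'
    · exact (div_mul_cancel₀ _ hp.ne').trans hsym.symm
    · rw [h2, div_mul_div_comm, h1]; field_simp; ring
  refine ⟨_, heq, fun h => ?_⟩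
  rw [← heq, Matrix.det_mul, h] at hd
  simp at hd

open scoped Kronecker in
lemma wald_pt (L₁ L₂ : Matrix (Fin 2) (Fin 2) ℝ) (h₁ : L₁.det ≠ 0) (h₂ : L₂.det ≠ 0)
    (y : Fin 2 × Fin 2 → ℝ) :
    waldRV (X (0, 0) * X (1, 1) - X (0, 1) * X (1, 0)) ((L₁ * L₁ᵀ) ⊗ₖ (L₂ * L₂ᵀ))
      ((L₁ ⊗ₖ L₂) *ᵥ y) =
    (y (0, 0) * y (1, 1) - y (0, 1) * y (1, 0)) ^ 2 /
      (y (0, 0) ^ 2 + y (0, 1) ^ 2 + y (1, 0) ^ 2 + y (1, 1) ^ 2) := by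
  have hne : (L₁.det * L₂.det) ^ 2 ≠ 0 := by positivity
  rw [← mul_div_mul_left _ _ hne]
  unfold waldRV
  congr 1
  · simp [Matrix.mulVec, dotProduct, Fintype.sum_prod_type, Fin.sum_univ_two, Matrix.det_fin_two]
    ring
  · simp [polyGrad, Matrix.mulVec, dotProduct, Fintype.sum_prod_type, Fin.sum_univ_two,
      Matrix.det_fin_two, Matrix.mul_apply, pderiv_X, Pi.single_apply]
    ring

/-- the orthogonal matrix diagonalizing the determinant -/
def rotM : Matrix (Fin 2 × Fin 2) (Fin 2 × Fin 2) ℝ := fun i j =>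
  (√2)⁻¹ * !![!![1, 0; 0, 1] j.1 j.2, !![0, 1; -1, 0] j.1 j.2;
    !![1, 0; 0, -1] j.1 j.2, !![0, 1; 1, 0] j.1 j.2] i.1 i.2

lemma sqrt2_inv : (√2 : ℝ)⁻¹ * (√2)⁻¹ = 1 / 2 := by
  rw [← mul_inv, Real.mul_self_sqrt (by norm_num)]; norm_num

lemma rotM_orth : rotM * rotMᵀ = 1 := by
  have h := sqrt2_inv
  ext ⟨i, i'⟩ ⟨j, j'⟩
  fin_cases i <;> fin_cases i' <;> fin_cases j <;> fin_cases j' <;>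
    simp [rotM, Matrix.mul_apply, Fintype.sum_prod_type, Fin.sum_univ_two, Matrix.one_apply] <;>
    linarith

/-- the final function -/
def hfun (p : Fin 2 × Fin 2 → ℝ) : ℝ :=
  ((p (0, 0) ^ 2 + p (0, 1) ^ 2) - (p (1, 0) ^ 2 + p (1, 1) ^ 2)) ^ 2 /
    (4 * ((p (0, 0) ^ 2 + p (0, 1) ^ 2) + (p (1, 0) ^ 2 + p (1, 1) ^ 2)))

lemma measurable_hfun : Measurable hfun := by unfold hfun; fun_prop

lemma rot_pt (y : Fin 2 × Fin 2 → ℝ) :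
    (y (0, 0) * y (1, 1) - y (0, 1) * y (1, 0)) ^ 2 /
      (y (0, 0) ^ 2 + y (0, 1) ^ 2 + y (1, 0) ^ 2 + y (1, 1) ^ 2) = hfun (rotM *ᵥ y) := by
  have h := sqrt2_inv
  have h00 : (rotM *ᵥ y) (0, 0) = (√2)⁻¹ * (y (0, 0) + y (1, 1)) := by
    simp [rotM, Matrix.mulVec, dotProduct, Fintype.sum_prod_type, Fin.sum_univ_two]; ring
  have h01 : (rotM *ᵥ y) (0, 1) = (√2)⁻¹ * (y (0, 1) - y (1, 0)) := by
    simp [rotM, Matrix.mulVec, dotProduct, Fintype.sum_prod_type, Fin.sum_univ_two]; ring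
  have h10 : (rotM *ᵥ y) (1, 0) = (√2)⁻¹ * (y (0, 0) - y (1, 1)) := by
    simp [rotM, Matrix.mulVec, dotProduct, Fintype.sum_prod_type, Fin.sum_univ_two]; ring
  have h11 : (rotM *ᵥ y) (1, 1) = (√2)⁻¹ * (y (0, 1) + y (1, 0)) := by
    simp [rotM, Matrix.mulVec, dotProduct, Fintype.sum_prod_type, Fin.sum_univ_two]; ring
  have hsq : ∀ a : ℝ, ((√2)⁻¹ * a) ^ 2 = 1 / 2 * a ^ 2 := by
    intro a; rw [mul_pow, pow_two (√2)⁻¹, h]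
  unfold hfun
  rw [h00, h01, h10, h11]
  simp only [hsq]
  rw [← mul_div_mul_left _ _ (four_ne_zero (α := ℝ))]
  congr 1 <;> ring

end TetradAux

open scoped Kronecker in
/-- Let `Σ = Σ⁽¹⁾ ⊗ Σ⁽²⁾` be the Kronecker product of two positive definite
`2×2` matrices and let `f(x₁,x₂,x₃,x₄) = x₁x₄ − x₂x₃` (the tetrad), where the coordinates
`x₁, x₂, x₃, x₄` are indexed by `(0,0), (0,1), (1,0), (1,1)` in the Kronecker ordering.
Then `W_{f,Σ}` has the same distribution as `(1/4)·R²·U²`, with `R² ~ χ²₄` and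
`U ~ Uniform[0,1]` independent. -/
theorem tetrad_waldRV (S₁ S₂ : Matrix (Fin 2) (Fin 2) ℝ)
    (hS₁ : S₁.PosDef) (hS₂ : S₂.PosDef)
    (μ : Measure ((Fin 2 × Fin 2) → ℝ)) (hμ : IsCenteredGaussian μ (S₁ ⊗ₖ S₂)) :
    μ.map (waldRV (X (0, 0) * X (1, 1) - X (0, 1) * X (1, 0)) (S₁ ⊗ₖ S₂)) =
      ((chiSq 4).prod (volume.restrict (Set.Icc (0 : ℝ) 1))).map
        (fun p => 1 / 4 * p.1 * p.2 ^ 2) := by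

  obtain ⟨A, hA, rfl⟩ := hμ
  obtain ⟨L₁, hL₁, hd₁⟩ := TetradAux.chol S₁ hS₁
  obtain ⟨L₂, hL₂, hd₂⟩ := TetradAux.chol S₂ hS₂
  set K := L₁ ⊗ₖ L₂ with hK
  have hKu : IsUnit K.det := by
    rw [hK, Matrix.det_kronecker]
    exact IsUnit.mk0 _ (mul_ne_zero (pow_ne_zero _ hd₁) (pow_ne_zero _ hd₂))
  have hKK : K * Kᵀ = S₁ ⊗ₖ S₂ := by
    rw [← hL₁, ← hL₂, Matrix.mul_kronecker_mul, hK, Matrix.kroneckerMap_transpose]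
  set B := TetradAux.rotM * (K⁻¹ * A) with hB
  have hO : (K⁻¹ * A) * (K⁻¹ * A)ᵀ = 1 := by
    rw [Matrix.transpose_mul, Matrix.mul_assoc, ← Matrix.mul_assoc A, hA, ← hKK,
      Matrix.mul_assoc K, ← Matrix.transpose_mul, Matrix.nonsing_inv_mul _ hKu,
      Matrix.transpose_one, Matrix.mul_one, Matrix.nonsing_inv_mul _ hKu]
  have hBB : B * Bᵀ = 1 := by
    rw [hB, Matrix.transpose_mul, Matrix.mul_assoc, ← Matrix.mul_assoc (K⁻¹ * A), hO,
      Matrix.one_mul, TetradAux.rotM_orth]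
  have hmulm : ∀ M : Matrix (Fin 2 × Fin 2) (Fin 2 × Fin 2) ℝ, Measurable M.mulVec := by
    intro M
    have : Continuous (M.mulVec) := by fun_prop
    exact this.measurable
  have hpt : ∀ x, waldRV (X (0, 0) * X (1, 1) - X (0, 1) * X (1, 0)) (S₁ ⊗ₖ S₂) x =
      TetradAux.hfun ((TetradAux.rotM * K⁻¹) *ᵥ x) := by
    intro x
    have hx : x = K *ᵥ (K⁻¹ *ᵥ x) := by
      rw [Matrix.mulVec_mulVec, Matrix.mul_nonsing_inv _ hKu, Matrix.one_mulVec]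
    conv_lhs => rw [hx, ← hL₁, ← hL₂]
    rw [hK, TetradAux.wald_pt L₁ L₂ hd₁ hd₂, TetradAux.rot_pt, Matrix.mulVec_mulVec]
  have hlaw : ((_root_.stdGaussian (Fin 2 × Fin 2)).map A.mulVec).map
      (waldRV (X (0, 0) * X (1, 1) - X (0, 1) * X (1, 0)) (S₁ ⊗ₖ S₂)) =
      (_root_.stdGaussian (Fin 2 × Fin 2)).map TetradAux.hfun := by
    have e := funext hpt
    have hme := TetradAux.measurable_hfun
    have hc : (fun x => TetradAux.hfun ((TetradAux.rotM * K⁻¹) *ᵥ x)) ∘ A.mulVec =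
        TetradAux.hfun ∘ B.mulVec := by
      ext x
      simp only [Function.comp, Matrix.mulVec_mulVec, hB, Matrix.mul_assoc]
    rw [e, Measure.map_map (g := fun x => TetradAux.hfun ((TetradAux.rotM * K⁻¹) *ᵥ x))
      (hme.comp (hmulm _)) (hmulm _), hc,
      ← Measure.map_map hme (hmulm _), TetradAux.rot_inv B hBB]
  rw [hlaw]
  have : IsProbabilityMeasure (_root_.stdGaussian (Fin 4)) := by
    unfold _root_.stdGaussian; infer_instance
  have : SFinite (chiSq 4) := by unfold chiSq; infer_instance
  refine Measure.ext_of_lintegral _ fun φ hφ => ?_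
  have hm : Measurable fun s : ℝ => ∫⁻ u in Set.Icc (0 : ℝ) 1, φ (1 / 4 * s * u ^ 2) := by
    refine Measurable.lintegral_prod_right' (f := fun p : ℝ × ℝ => φ (1 / 4 * p.1 * p.2 ^ 2)) ?_
    fun_prop
  rw [lintegral_map hφ TetradAux.measurable_hfun, TetradAux.std22,
    lintegral_map (f := fun a => φ (TetradAux.hfun a)) (hφ.comp TetradAux.measurable_hfun) (by
      refine measurable_pi_lambda _ fun i => ?_
      fin_cases i <;> simp <;> fun_prop),
    lintegral_map hφ (by fun_prop), lintegral_prod (fun p : ℝ × ℝ => φ (1 / 4 * p.1 * p.2 ^ 2)) (by fun_prop)]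
  have hsum : Measurable (fun z : Fin 4 → ℝ => ∑ i, (z i) ^ 2) := by fun_prop
  rw [chiSq, lintegral_map hm hsum, TetradAux.std4, lintegral_map (f := fun a : Fin 4 → ℝ =>
      ∫⁻ u in Set.Icc (0 : ℝ) 1, φ (1 / 4 * (∑ i, (a i) ^ 2) * u ^ 2)) (hm.comp hsum) (by
      refine measurable_pi_lambda _ fun i => ?_
      fin_cases i <;> simp <;> fun_prop)]
  have h1 := TetradAux.pair_law (fun x y => φ ((x - y) ^ 2 / (4 * (x + y))))
    (by unfold Function.uncurry; fun_prop)
  have h2 := TetradAux.pair_law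
    (fun x y => ∫⁻ u in Set.Icc (0 : ℝ) 1, φ (1 / 4 * (x + y) * u ^ 2))
    (hm.comp (measurable_fst.add measurable_snd))
  rw [← TetradAux.key φ hφ, ← h1] at h2
  refine Eq.trans ?_ (h2.symm.trans ?_)
  · refine lintegral_congr fun z => ?_
    simp [TetradAux.hfun]
  · refine lintegral_congr fun z => ?_
    simp [Fin.sum_univ_four, add_assoc]
end
end

section
/- Suppose R² ~ χ²₄ and U ~ Uniform[0,1] are independent. Then (1/4)·R²·U² is stochastically dominated by χ²₁, i.e., (1/4)·R²·U² ≤_st χ²₁. -/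
open MeasureTheory ProbabilityTheory Matrix MvPolynomial Real

noncomputable section

lemma aux_meas (k : ℕ) : Measurable (fun z : Fin k → ℝ => ∑ i, (z i) ^ 2) := by
  fun_prop

lemma aux_integral_one :
    ∫ x, rexp (x ^ 2 / 4) ∂(gaussianReal 0 1) = √2 := by
  rw [integral_gaussianReal_eq_integral_smul one_ne_zero]
  have h : ∀ x : ℝ, gaussianPDFReal 0 1 x • rexp (x ^ 2 / 4)
      = (√(2 * π))⁻¹ * rexp (-(1 / 4) * x ^ 2) := by
    intro x
    simp only [gaussianPDFReal, NNReal.coe_one, mul_one, sub_zero, smul_eq_mul]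
    rw [mul_assoc, ← Real.exp_add]
    congr 2
    ring
  simp_rw [h]
  rw [integral_const_mul, integral_gaussian, ← Real.sqrt_inv, ← Real.sqrt_mul (by positivity)]
  congr 1
  field_simp
  norm_num

lemma aux_integral_four :
    ∫ r, rexp (r / 4) ∂(chiSq 4) = 4 := by
  unfold chiSq _root_.stdGaussian
  rw [integral_map (aux_meas 4).aemeasurable (by fun_prop)]
  have h : ∀ z : Fin 4 → ℝ, rexp ((∑ i, (z i) ^ 2) / 4) = ∏ i, rexp ((z i) ^ 2 / 4) := by
    intro z
    rw [← Real.exp_sum, Finset.sum_div]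
  simp_rw [h]
  rw [integral_fintype_prod_eq_pow (fun x : ℝ => rexp (x ^ 2 / 4)), aux_integral_one]
  have h2 : √2 ^ 2 = (2 : ℝ) := Real.sq_sqrt (by norm_num)
  simp only [Fintype.card_fin]
  calc √2 ^ 4 = (√2 ^ 2) ^ 2 := by ring
    _ = 4 := by rw [h2]; norm_num

lemma aux_integrable : Integrable (fun r => rexp (r / 4)) (chiSq 4) := by
  by_contra h
  have := aux_integral_four
  rw [integral_undef h] at this
  norm_num at this

instance aux_prob (k : ℕ) : IsProbabilityMeasure (chiSq k) := by
  unfold chiSq _root_.stdGaussian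
  exact Measure.isProbabilityMeasure_map (aux_meas k).aemeasurable

/-- The elementary inequality `1 - 2/x ≤ e^{x²/4}/20`. -/
lemma aux_exp_bound (x : ℝ) (hx : 0 < x) : 1 - 2 / x ≤ rexp (x ^ 2 / 4) / 20 := by
  have h1 : (4.4 : ℝ) ≤ rexp (3 / 2) := by
    have h3 : rexp (3 / 2) ^ 2 = rexp 1 ^ 3 := by
      rw [← Real.exp_nat_mul, ← Real.exp_nat_mul]; norm_num
    have h4 : (2.7 : ℝ) ^ 3 ≤ rexp 1 ^ 3 := by
      gcongr
      linarith [Real.exp_one_gt_d9]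
    by_contra! h
    have h5 : rexp (3 / 2) ^ 2 < 4.4 ^ 2 := by gcongr
    rw [h3] at h5
    linarith [(by norm_num : (4.4 : ℝ) ^ 2 < 2.7 ^ 3)]
  have h2 : rexp (x ^ 2 / 4) = rexp (3 / 2) * rexp (x ^ 2 / 4 - 3 / 2) := by
    rw [← Real.exp_add]; congr 1; ring
  have h3 := Real.add_one_le_exp (x ^ 2 / 4 - 3 / 2)
  have h4 : 4.4 * (x ^ 2 / 4 - 3 / 2 + 1) ≤ rexp (x ^ 2 / 4) := by
    rw [h2]
    have h5 : 4.4 * rexp (x ^ 2 / 4 - 3 / 2) ≤ rexp (3 / 2) * rexp (x ^ 2 / 4 - 3 / 2) := by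
      gcongr
    linarith
  have h5 : 1 - 2 / x ≤ 4.4 * (x ^ 2 / 4 - 3 / 2 + 1) / 20 := by
    rw [← sub_nonneg]
    have : 4.4 * (x ^ 2 / 4 - 3 / 2 + 1) / 20 - (1 - 2 / x)
        = (0.055 * x ^ 3 - 1.11 * x + 2) / x := by
      field_simp
      ring
    rw [this]
    apply div_nonneg _ hx.le
    nlinarith [mul_nonneg (sq_nonneg (x - 2.6)) (by linarith : (0:ℝ) ≤ x + 5.2)]
  linarith

/-- The pointwise bound of the conditional tail, for `s ≤ 1`. -/
lemma aux_small (s r : ℝ) (h0 : 0 ≤ s) (hr : 0 < r) :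
    1 - 2 * s / √r ≤ (1 - s) + s / 20 * rexp (r / 4) := by
  have h := aux_exp_bound (√r) (by positivity)
  rw [Real.sq_sqrt hr.le] at h
  have : s * (1 - 2 / √r) ≤ s * (rexp (r / 4) / 20) := by gcongr
  have e : 2 * s / √r = s * (2 / √r) := by ring
  rw [e]
  linarith

lemma aux_large (s r : ℝ) (h1 : 1 ≤ s) (hr : 0 < r) :
    1 - 2 * s / √r ≤ rexp (1 - s ^ 2) / 20 * rexp (r / 4) := by
  have hs : 0 < √r := by positivity
  by_cases hc : √r ≤ 2 * s
  · have : 1 ≤ 2 * s / √r := by rwa [one_le_div hs]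
    have : 0 ≤ rexp (1 - s ^ 2) / 20 * rexp (r / 4) := by positivity
    linarith
  push Not at hc
  have h := aux_exp_bound (√r / s) (by positivity)
  rw [div_pow, Real.sq_sqrt hr.le] at h
  have e : 2 / (√r / s) = 2 * s / √r := by field_simp
  rw [e] at h
  refine h.trans ?_
  rw [div_mul_eq_mul_div, ← Real.exp_add]
  gcongr
  have h4 : 4 * s ^ 2 ≤ r := by
    have := Real.sq_sqrt hr.le
    nlinarith
  have : 1 - s ^ 2 + r / 4 - r / s ^ 2 / 4 = (s ^ 2 - 1) * (r - 4 * s ^ 2) / (4 * s ^ 2) := by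
    field_simp
    ring
  have h5 : 0 ≤ (s ^ 2 - 1) * (r - 4 * s ^ 2) / (4 * s ^ 2) := by
    apply div_nonneg _ (by positivity)
    apply mul_nonneg <;> nlinarith
  linarith

/-- Bounding the left-hand side by an exponential moment. -/
lemma aux_lhs (s a b : ℝ) (hs : 0 ≤ s) (ha : 0 ≤ a) (hb : 0 ≤ b)
    (h : ∀ r : ℝ, 0 < r → 1 - 2 * s / √r ≤ a + b * rexp (r / 4)) :
    ((chiSq 4).prod (volume.restrict (Set.Icc (0 : ℝ) 1))).map
        (fun p => 1 / 4 * p.1 * p.2 ^ 2) (Set.Ioi (s ^ 2)) ≤ ENNReal.ofReal (a + 4 * b) := by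
  rw [Measure.map_apply (by fun_prop) measurableSet_Ioi,
    Measure.prod_apply (measurableSet_Ioi.preimage (by fun_prop))]
  have hint : Integrable (fun r => a + b * rexp (r / 4)) (chiSq 4) :=
    (integrable_const a).add (aux_integrable.const_mul b)
  have hval : ∫ r, (a + b * rexp (r / 4)) ∂(chiSq 4) = a + 4 * b := by
    rw [integral_add (integrable_const a) (aux_integrable.const_mul b), integral_const_mul,
      aux_integral_four]
    simp [mul_comm]
  rw [← hval, ofReal_integral_eq_lintegral_ofReal hint (ae_of_all _ fun r => by positivity)]
  apply lintegral_mono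
  intro r
  beta_reduce
  by_cases hr : 0 < r
  · refine le_trans ?_ (ENNReal.ofReal_le_ofReal (h r hr))
    rw [← Real.volume_Icc, Measure.restrict_apply' measurableSet_Icc]
    apply measure_mono
    rintro u ⟨hu, hu0, hu1⟩
    refine ⟨?_, hu1⟩
    simp only [Set.mem_preimage, Set.mem_Ioi] at hu
    rw [div_le_iff₀ (by positivity)]
    apply le_of_sq_le_sq _ (by positivity)
    rw [mul_pow, mul_pow, Real.sq_sqrt hr.le]
    linarith
  · have : Prod.mk r ⁻¹' ((fun p : ℝ × ℝ => 1 / 4 * p.1 * p.2 ^ 2) ⁻¹' Set.Ioi (s ^ 2)) = ∅ := by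
      ext u
      simp only [Set.mem_preimage, Set.mem_Ioi, Set.mem_empty_iff_false, iff_false, not_lt]
      nlinarith [sq_nonneg u, sq_nonneg s, mul_nonneg (sq_nonneg u) (by linarith : 0 ≤ -r)]
    rw [this, measure_empty]
    exact zero_le

lemma aux_chiSq_one (t : ℝ) :
    chiSq 1 (Set.Ioi t) = gaussianReal 0 1 {x | t < x ^ 2} := by
  unfold chiSq _root_.stdGaussian
  rw [Measure.map_apply (by fun_prop) measurableSet_Ioi,
    ← (measurePreserving_eval (fun _ : Fin 1 => gaussianReal 0 1) 0).measure_preimage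
      (measurableSet_lt measurable_const (by fun_prop)).nullMeasurableSet]
  congr 1
  ext z
  simp

lemma aux_pi : (√(2 * π))⁻¹ ≤ 0.4 := by
  rw [inv_le_comm₀ (by positivity) (by norm_num)]
  apply Real.le_sqrt_of_sq_le
  have := Real.pi_gt_d2
  norm_num at this ⊢
  linarith

lemma aux_pi2 : 0.39 ≤ (√(2 * π))⁻¹ := by
  rw [le_inv_comm₀ (by norm_num) (by positivity)]
  apply Real.sqrt_le_iff.mpr
  have := Real.pi_lt_d2
  norm_num at this ⊢
  linarith

lemma aux_rhs_small (s : ℝ) (h0 : 0 ≤ s) :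
    ENNReal.ofReal (1 - 0.8 * s) ≤ gaussianReal 0 1 {x | s ^ 2 < x ^ 2} := by
  have hc : {x : ℝ | s ^ 2 < x ^ 2} = (Set.Icc (-s) s)ᶜ := by
    ext x
    simp only [Set.mem_ofPred_eq, Set.mem_compl_iff, Set.mem_Icc, ← abs_le, not_le,
      sq_lt_sq, abs_of_nonneg h0]
  rw [hc, prob_compl_eq_one_sub measurableSet_Icc]
  rw [ENNReal.ofReal_sub _ (by positivity), ENNReal.ofReal_one]
  gcongr
  rw [gaussianReal_apply _ one_ne_zero]
  calc ∫⁻ x in Set.Icc (-s) s, gaussianPDF 0 1 x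
      ≤ ∫⁻ x in Set.Icc (-s) s, ENNReal.ofReal 0.4 := by
        apply lintegral_mono
        intro x
        apply ENNReal.ofReal_le_ofReal
        simp only [gaussianPDFReal, NNReal.coe_one, mul_one, sub_zero]
        have h1 : rexp (-x ^ 2 / 2) ≤ 1 := by
          rw [Real.exp_le_one_iff]; nlinarith [sq_nonneg x]
        calc _ ≤ 0.4 * (1 : ℝ) := by gcongr; exact aux_pi
          _ = 0.4 := by norm_num
    _ = ENNReal.ofReal (0.8 * s) := by
        rw [setLIntegral_const, Real.volume_Icc, ← ENNReal.ofReal_mul (by norm_num)]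
        congr 1; ring

lemma aux_tail (s : ℝ) (h0 : 0 ≤ s) :
    IntegrableOn (fun x => 2 * x * rexp (-x ^ 2)) (Set.Ioi s) ∧
    ∫ x in Set.Ioi s, 2 * x * rexp (-x ^ 2) = rexp (-s ^ 2) := by
  have hd : ∀ x ∈ Set.Ici s, HasDerivAt (fun x => -rexp (-x ^ 2)) (2 * x * rexp (-x ^ 2)) x := by
    intro x _
    have := (((hasDerivAt_id x).pow 2).neg.exp).neg
    convert! this using 1
    simp
    ring
  have hp : ∀ x ∈ Set.Ioi s, 0 ≤ 2 * x * rexp (-x ^ 2) := by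
    intro x hx
    have : 0 < x := h0.trans_lt hx
    positivity
  have ht : Filter.Tendsto (fun x : ℝ => -rexp (-x ^ 2)) Filter.atTop (nhds 0) := by
    rw [← neg_zero]
    apply Filter.Tendsto.neg
    exact Real.tendsto_exp_neg_atTop_nhds_zero.comp (Filter.tendsto_pow_atTop two_ne_zero)
  refine ⟨integrableOn_Ioi_deriv_of_nonneg' hd hp ht, ?_⟩
  rw [integral_Ioi_of_hasDerivAt_of_nonneg' hd hp ht]
  simp

lemma aux_half (s : ℝ) (h0 : 0 ≤ s) :
    ENNReal.ofReal (0.273 * rexp (-s ^ 2)) ≤ gaussianReal 0 1 (Set.Ioi s) := by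
  rw [gaussianReal_apply_eq_integral _ one_ne_zero]
  apply ENNReal.ofReal_le_ofReal
  obtain ⟨h1, h2⟩ := aux_tail s h0
  rw [← h2, ← integral_const_mul]
  apply setIntegral_mono_on (h1.const_mul _) (integrable_gaussianPDFReal _ _).integrableOn
    measurableSet_Ioi
  intro x hx
  have hx0 : 0 < x := h0.trans_lt hx
  simp only [gaussianPDFReal, NNReal.coe_one, mul_one, sub_zero]
  have e : rexp (-x ^ 2 / 2) = rexp (x ^ 2 / 2) * rexp (-x ^ 2) := by
    rw [← Real.exp_add]; congr 1; ring
  have h3 := Real.add_one_le_exp (x ^ 2 / 2)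
  have h4 : 1.4 * x ≤ rexp (x ^ 2 / 2) := by nlinarith [sq_nonneg (x - 1.4)]
  calc 0.273 * (2 * x * rexp (-x ^ 2)) = 0.39 * (1.4 * x) * rexp (-x ^ 2) := by ring
    _ ≤ (√(2 * π))⁻¹ * rexp (x ^ 2 / 2) * rexp (-x ^ 2) := by
      gcongr
      exact aux_pi2
    _ = _ := by rw [e]; ring

lemma aux_rhs_large (s : ℝ) (h0 : 0 ≤ s) :
    ENNReal.ofReal (0.546 * rexp (-s ^ 2)) ≤ gaussianReal 0 1 {x | s ^ 2 < x ^ 2} := by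
  have hn : gaussianReal 0 1 (Set.Iio (-s)) = gaussianReal 0 1 (Set.Ioi s) := by
    have := gaussianReal_map_neg (μ := 0) (v := 1)
    rw [neg_zero] at this
    nth_rewrite 2 [← this]
    rw [Measure.map_apply (by fun_prop) measurableSet_Ioi]
    congr 1
    ext x
    simp only [Set.mem_Iio, Set.mem_preimage, Set.mem_Ioi]
    exact lt_neg
  have hsub : Set.Iio (-s) ∪ Set.Ioi s ⊆ {x | s ^ 2 < x ^ 2} := by
    rintro x (hx | hx)
    · simp only [Set.mem_Iio] at hx
      simp only [Set.mem_ofPred_eq]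
      nlinarith
    · simp only [Set.mem_Ioi] at hx
      simp only [Set.mem_ofPred_eq]
      nlinarith
  refine le_trans ?_ (measure_mono hsub)
  rw [measure_union _ measurableSet_Ioi, hn]
  · have h := aux_half s h0
    have e : 0.546 * rexp (-s ^ 2) = 0.273 * rexp (-s ^ 2) + 0.273 * rexp (-s ^ 2) := by ring
    rw [e, ENNReal.ofReal_add (by positivity) (by positivity)]
    gcongr
  · rw [Set.disjoint_left]
    intro x hx hx'
    simp only [Set.mem_Iio, Set.mem_Ioi] at hx hx'
    linarith

/-- If `R² ~ χ²₄` and `U ~ Uniform[0,1]` are independent, then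
`(1/4)·R²·U² ≤_st χ²₁`. -/
theorem quarter_R2U2_le_chiSq_one :
    ∀ t : ℝ, ((chiSq 4).prod (volume.restrict (Set.Icc (0 : ℝ) 1))).map
        (fun p => 1 / 4 * p.1 * p.2 ^ 2) (Set.Ioi t) ≤
      chiSq 1 (Set.Ioi t) := by
  intro t
  rcases lt_or_ge t 0 with ht | ht
  · have h1 : chiSq 1 (Set.Ioi t) = 1 := by
      rw [aux_chiSq_one]
      have : {x : ℝ | t < x ^ 2} = Set.univ := by
        ext x
        simp only [Set.mem_ofPred_eq, Set.mem_univ, iff_true]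
        nlinarith [sq_nonneg x]
      rw [this, measure_univ]
    rw [h1]
    have : IsProbabilityMeasure (volume.restrict (Set.Icc (0 : ℝ) 1)) := ⟨by simp⟩
    have := Measure.isProbabilityMeasure_map (μ := (chiSq 4).prod (volume.restrict (Set.Icc (0 : ℝ) 1)))
      (f := fun p : ℝ × ℝ => 1 / 4 * p.1 * p.2 ^ 2) (by fun_prop)
    exact prob_le_one
  obtain ⟨s, hs, rfl⟩ : ∃ s : ℝ, 0 ≤ s ∧ t = s ^ 2 :=
    ⟨√t, Real.sqrt_nonneg t, (Real.sq_sqrt ht).symm⟩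
  rw [aux_chiSq_one]
  rcases le_total s 1 with h1 | h1
  · refine (aux_lhs s (1 - s) (s / 20) hs (by linarith) (by positivity)
      fun r hr => aux_small s r hs hr).trans (le_trans ?_ (aux_rhs_small s hs))
    apply ENNReal.ofReal_le_ofReal
    linarith
  · refine (aux_lhs s 0 (rexp (1 - s ^ 2) / 20) hs le_rfl (by positivity)
      fun r hr => by rw [zero_add]; exact aux_large s r h1 hr).trans
        (le_trans ?_ (aux_rhs_large s hs))
    apply ENNReal.ofReal_le_ofReal
    have e : rexp (1 - s ^ 2) = rexp 1 * rexp (-s ^ 2) := by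
      rw [← Real.exp_add]; congr 1
    rw [e]
    have := Real.exp_one_lt_d9
    have h3 : rexp 1 * rexp (-s ^ 2) ≤ 2.73 * rexp (-s ^ 2) := by
      gcongr
      linarith
    linarith
end
end
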